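/- Conversely, for a unit-speed plane curve γ with nowhere-vanishing curvature, if a smooth velocity field v on [0,L] satisfies ε_v = v'·t = 0 and χ_v = (v'·t⊥)' = 0 identically, then v is a rigid velocity field: v(s) = v(0) + ω₀ R(γ(s) − γ(0)) for some constant ω₀ ∈ ℝ. -/

import Mathlib

/-!
In the orthonormal frame `(t, t⊥)` with `t = γ'`, the condition `ε_v = 0` says that `v'` has no
tangential component, so `v' = g t⊥` with `g = v' · t⊥`. The condition `χ_v = 0` says `g' = 0`,
hence `g` is a constant `ω₀`. Then `v' = ω₀ R γ' = (ω₀ R γ)'`, and `v - ω₀ R γ` is constant.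
-/

/-- Counterclockwise rotation by π/2 in the plane. -/
def rot (p : ℝ × ℝ) : ℝ × ℝ := (-p.2, p.1)

/-- Euclidean dot product on ℝ². -/
def dot (p q : ℝ × ℝ) : ℝ := p.1 * q.1 + p.2 * q.2

theorem HasDerivAt.rot {f : ℝ → ℝ × ℝ} {f' : ℝ × ℝ} {s : ℝ} (hf : HasDerivAt f f' s) :
    HasDerivAt (fun t => rot (f t)) (rot f') s := by
  have h1 : HasDerivAt (fun t => (f t).1) f'.1 s :=
    (ContinuousLinearMap.fst ℝ ℝ ℝ).hasFDerivAt.comp_hasDerivAt s hf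
  have h2 : HasDerivAt (fun t => (f t).2) f'.2 s :=
    (ContinuousLinearMap.snd ℝ ℝ ℝ).hasFDerivAt.comp_hasDerivAt s hf
  exact h2.neg.prodMk h1

theorem Differentiable.dot {f g : ℝ → ℝ × ℝ} (hf : Differentiable ℝ f)
    (hg : Differentiable ℝ g) : Differentiable ℝ (fun t => dot (f t) (g t)) :=
  (hf.fst.mul hg.fst).add (hf.snd.mul hg.snd)

/-- A vector orthogonal to a unit vector `t` is its own projection onto `rot t`. -/
theorem eq_smul_rot_of_dot_eq_zero {t w : ℝ × ℝ} (ht : dot t t = 1) (hw : dot w t = 0) :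
    w = dot w (rot t) • rot t := by
  obtain ⟨a, b⟩ := t
  obtain ⟨x, y⟩ := w
  simp only [dot, rot, Prod.smul_mk, smul_eq_mul, Prod.mk.injEq] at *
  constructor
  · linear_combination (-x) * ht + a * hw
  · linear_combination (-y) * ht + b * hw

theorem eq_of_hasDerivAt_zero_on_Icc {E : Type*} [NormedAddCommGroup E] [NormedSpace ℝ E]
    {L : ℝ} {f : ℝ → E} (hf : ∀ s ∈ Set.Icc 0 L, HasDerivAt f 0 s) :
    ∀ s ∈ Set.Icc 0 L, f s = f 0 :=
  constant_of_has_deriv_right_zero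
    (fun s hs => (hf s hs).continuousAt.continuousWithinAt)
    (fun s hs => (hf s (Set.Ico_subset_Icc_self hs)).hasDerivWithinAt)

theorem zero_deformation_implies_rigid (L : ℝ) (hL : 0 < L)
    (γ : ℝ → ℝ × ℝ) (hγ : ContDiff ℝ (⊤ : ℕ∞) γ)
    (hunit : ∀ s : ℝ, dot (deriv γ s) (deriv γ s) = 1)
    (hcurv : ∀ s ∈ Set.Icc (0:ℝ) L, deriv (deriv γ) s ≠ 0)
    (v : ℝ → ℝ × ℝ) (hv : ContDiff ℝ (⊤ : ℕ∞) v)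
    (hε : ∀ s ∈ Set.Icc (0:ℝ) L, dot (deriv v s) (deriv γ s) = 0)
    (hχ : ∀ s ∈ Set.Icc (0:ℝ) L,
      deriv (fun t : ℝ => dot (deriv v t) (rot (deriv γ t))) s = 0) :
    ∃ ω₀ : ℝ, ∀ s ∈ Set.Icc (0:ℝ) L, v s = v 0 + ω₀ • rot (γ s - γ 0) := by
  have hγd : Differentiable ℝ γ := hγ.differentiable (by simp)
  have hvd : Differentiable ℝ v := hv.differentiable (by simp)
  have hγ' : Differentiable ℝ (deriv γ) :=
    (hγ.iterate_deriv 1).differentiable (by simp)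
  have hv' : Differentiable ℝ (deriv v) :=
    (hv.iterate_deriv 1).differentiable (by simp)
  have hgd : Differentiable ℝ (fun t => dot (deriv v t) (rot (deriv γ t))) :=
    hv'.dot fun t => (hγ' t).hasDerivAt.rot.differentiableAt
  have hg := eq_of_hasDerivAt_zero_on_Icc (L := L) fun s hs => hχ s hs ▸ (hgd s).hasDerivAt
  refine ⟨dot (deriv v 0) (rot (deriv γ 0)), fun s hs => ?_⟩
  set ω₀ := dot (deriv v 0) (rot (deriv γ 0))
  have hder : ∀ s ∈ Set.Icc 0 L,
      HasDerivAt (fun t => v t - ω₀ • rot (γ t - γ 0)) 0 s := by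
    intro s hs
    have hvs : deriv v s = ω₀ • rot (deriv γ s) := by
      rw [← hg s hs]
      exact eq_smul_rot_of_dot_eq_zero (hunit s) (hε s hs)
    have h := (hvd s).hasDerivAt.sub
      ((((hγd s).hasDerivAt.sub_const (γ 0)).rot).const_smul ω₀)
    rw [hvs, sub_self] at h
    exact h
  have h := eq_of_hasDerivAt_zero_on_Icc hder s hs
  have h0 : rot (0 : ℝ × ℝ) = 0 := by simp [rot]
  simp only [sub_self, h0, smul_zero, sub_zero] at h
  exact sub_eq_iff_eq_add.mp h
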